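/- arXiv:2602.24189 — 2 statements merged into one kernel-verified Lean document; each statement's English description precedes it below -/
import Mathlib

section
/- For α ∈ (0,1) and every Schwartz function φ on ℝ, ∫_ℝ C_{1,α} |x|^{−(1−α)} (𝓕φ)(x) dx = ∫_ℝ |ξ|^{−α} φ(ξ) dξ, where C_{1,α} = π^{−1/2} 2^{−α} Γ((1−α)/2)/Γ(α/2); that is, the Fourier transform of the Riesz kernel R_{1,α}(x) = C_{1,α}|x|^{−(1−α)}, taken in the sense of tempered distributions, is the function g(ξ) = |ξ|^{−α}. -/
open MeasureTheory Real

/-- The Fourier transform `(𝓕φ)(ξ) = ∫ e^{-iξx} φ(x) dx` of a real-valued function. -/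
noncomputable def fourierT (φ : ℝ → ℝ) (ξ : ℝ) : ℂ :=
  ∫ x : ℝ, Complex.exp (-(Complex.I * (ξ : ℂ) * (x : ℂ))) * (φ x : ℂ)

/-- The constant `C_{1,α} = π^{-1/2} 2^{-α} Γ((1-α)/2)/Γ(α/2)` of the Riesz kernel. -/
noncomputable def rieszConst (α : ℝ) : ℝ :=
  π ^ (-(1 / 2) : ℝ) * (2 : ℝ) ^ (-α) * (Gamma ((1 - α) / 2) / Gamma (α / 2))

lemma aux_absint {β : ℝ} (h0 : 0 < β) (h1 : β < 1) :
    Integrable (fun x : ℝ => |x| ^ (-β) * Real.exp (-1 * |x| ^ 2)) := by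
  have h := (integrable_fun_norm_addHaar (E := ℝ) (μ := volume)
    (f := fun y : ℝ => y ^ (-β) * Real.exp (-1 * y ^ 2))).2 (by
      simpa using integrableOn_rpow_mul_exp_neg_mul_sq one_pos (s := -β) (by linarith))
  simpa using h

lemma aux_int {β : ℝ} (h0 : 0 < β) (h1 : β < 1) {G : ℝ → ℂ} (hc : Continuous G)
    (hi : Integrable G) {M : ℝ} (hM : ∀ x, ‖G x‖ ≤ M) :
    Integrable (fun x : ℝ => |x| ^ (-β) * ‖G x‖) := by
  have hM0 : 0 ≤ M := (norm_nonneg _).trans (hM 0)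
  refine (((aux_absint h0 h1).const_mul (M * Real.exp 1)).add hi.norm).mono' ?_ ?_
  · exact (Measurable.mul (by fun_prop) hc.norm.measurable).aestronglyMeasurable
  · refine Filter.Eventually.of_forall fun x => ?_
    have hn := norm_nonneg (G x)
    have hp : 0 ≤ |x| ^ (-β) := by positivity
    rw [norm_of_nonneg (by positivity)]
    simp only [Pi.add_apply]
    rcases le_total |x| 1 with hx | hx
    · have h2 : 1 ≤ Real.exp 1 * Real.exp (-1 * |x| ^ 2) := by
        rw [← Real.exp_add]
        apply Real.one_le_exp
        nlinarith [abs_nonneg x]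
      have : |x| ^ (-β) * ‖G x‖ ≤ |x| ^ (-β) * M * 1 := by
        rw [mul_one]; exact mul_le_mul_of_nonneg_left (hM x) hp
      have h3 : |x| ^ (-β) * M * 1 ≤ |x| ^ (-β) * M * (Real.exp 1 * Real.exp (-1 * |x| ^ 2)) :=
        mul_le_mul_of_nonneg_left h2 (by positivity)
      linarith
    · have h2 : |x| ^ (-β) ≤ 1 := rpow_le_one_of_one_le_of_nonpos hx (by linarith)
      have h3 : |x| ^ (-β) * ‖G x‖ ≤ 1 * ‖G x‖ := mul_le_mul_of_nonneg_right h2 hn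
      have : 0 ≤ M * Real.exp 1 * (|x| ^ (-β) * Real.exp (-1 * |x| ^ 2)) := by positivity
      linarith

lemma aux_gamma {β x : ℝ} (h0 : 0 < β) (hx : x ≠ 0) :
    ∫ s in Set.Ioi (0 : ℝ), s ^ (β / 2 - 1) * Real.exp (-(x ^ 2 * s))
      = |x| ^ (-β) * Real.Gamma (β / 2) := by
  rw [integral_rpow_mul_exp_neg_mul_Ioi (by linarith) (by positivity)]
  congr 1
  rw [one_div, ← sq_abs, ← rpow_natCast, ← rpow_neg (abs_nonneg x), ← rpow_mul (abs_nonneg x)]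
  congr 1
  push_cast
  ring

lemma aux_sub {β : ℝ} (h0 : 0 < β) (h1 : β < 1) {G : ℝ → ℂ} (hc : Continuous G)
    (hi : Integrable G) {M : ℝ} (hM : ∀ x, ‖G x‖ ≤ M) :
    ∫ x : ℝ, ((|x| ^ (-β) * Real.Gamma (β / 2) : ℝ) : ℂ) * G x
      = ∫ s in Set.Ioi (0 : ℝ), ((s ^ (β / 2 - 1) : ℝ) : ℂ) *
          ∫ x : ℝ, ((Real.exp (-(x ^ 2 * s)) : ℝ) : ℂ) * G x := by
  have hne : ∀ᵐ x : ℝ, x ≠ 0 := by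
    simp [ae_iff, measure_singleton]
  have hint : ∀ x : ℝ, x ≠ 0 → IntegrableOn
      (fun s : ℝ => s ^ (β / 2 - 1) * Real.exp (-(x ^ 2 * s))) (Set.Ioi 0) := by
    intro x hx
    by_contra H
    have h2 := aux_gamma h0 hx
    rw [integral_undef H] at h2
    have : 0 < |x| ^ (-β) * Real.Gamma (β / 2) :=
      mul_pos (rpow_pos_of_pos (abs_pos.2 hx) _) (Real.Gamma_pos_of_pos (by linarith))
    linarith
  have hprod : Integrable (Function.uncurry fun (x s : ℝ) =>
      ((s ^ (β / 2 - 1) * Real.exp (-(x ^ 2 * s)) : ℝ) : ℂ) * G x)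
      ((volume : Measure ℝ).prod (volume.restrict (Set.Ioi (0 : ℝ)))) := by
    rw [integrable_prod_iff]
    · constructor
      · filter_upwards [hne] with x hx
        simp only [Function.uncurry_apply_pair]
        exact (Integrable.ofReal (𝕜 := ℂ) (hint x hx)).mul_const (G x)
      · refine ((aux_int h0 h1 hc hi hM).mul_const (Real.Gamma (β / 2))).congr ?_
        filter_upwards [hne] with x hx
        have : ∀ s ∈ Set.Ioi (0 : ℝ), ‖Function.uncurry (fun (x s : ℝ) =>
            ((s ^ (β / 2 - 1) * Real.exp (-(x ^ 2 * s)) : ℝ) : ℂ) * G x) (x, s)‖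
            = (s ^ (β / 2 - 1) * Real.exp (-(x ^ 2 * s))) * ‖G x‖ := by
          intro s hs
          have hs' : (0 : ℝ) < s := hs
          simp only [Function.uncurry_apply_pair, norm_mul, Complex.norm_real]
          rw [norm_of_nonneg (by positivity), norm_of_nonneg (by positivity)]
        rw [setIntegral_congr_fun measurableSet_Ioi this, integral_mul_const, aux_gamma h0 hx]
        ring
    · refine Measurable.aestronglyMeasurable ?_
      have := hc.measurable
      unfold Function.uncurry
      fun_prop
  calc _ = ∫ x : ℝ, ∫ s in Set.Ioi (0 : ℝ),
        ((s ^ (β / 2 - 1) * Real.exp (-(x ^ 2 * s)) : ℝ) : ℂ) * G x := by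
        refine integral_congr_ae ?_
        filter_upwards [hne] with x hx
        rw [integral_mul_const, integral_complex_ofReal, aux_gamma h0 hx]
    _ = ∫ s in Set.Ioi (0 : ℝ), ∫ x : ℝ,
        ((s ^ (β / 2 - 1) * Real.exp (-(x ^ 2 * s)) : ℝ) : ℂ) * G x := integral_integral_swap hprod
    _ = _ := by
        congr 1
        ext s
        rw [← integral_const_mul]
        congr 1
        ext x
        push_cast
        ring

lemma aux_parseval {g : ℝ → ℝ} (hc : Continuous g) (hi : Integrable g) {s : ℝ} (hs : 0 < s) :
    ∫ x : ℝ, ((Real.exp (-(x ^ 2 * s)) : ℝ) : ℂ) * fourierT g x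
      = ∫ y : ℝ, (((π / s) ^ (1 / 2 : ℝ) * Real.exp (-(y ^ 2 * (1 / (4 * s)))) : ℝ) : ℂ)
          * (g y : ℂ) := by
  have hg : Integrable (fun x : ℝ => ((Real.exp (-(x ^ 2 * s)) : ℝ) : ℂ)) := by
    have := (integrable_exp_neg_mul_sq hs).ofReal (𝕜 := ℂ)
    refine this.congr (Filter.Eventually.of_forall fun x => ?_)
    simp only
    congr 3
    ring
  have hp := (hg.mul_prod (hi.ofReal (𝕜 := ℂ)))
  have hp2 : Integrable (Function.uncurry fun x y : ℝ => ((Real.exp (-(x ^ 2 * s)) : ℝ) : ℂ) *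
      (Complex.exp (-(Complex.I * (x : ℂ) * (y : ℂ))) * (g y : ℂ)))
      ((volume : Measure ℝ).prod volume) := by
    refine hp.mono ?_ (Filter.Eventually.of_forall fun p => ?_)
    · refine Continuous.aestronglyMeasurable ?_
      unfold Function.uncurry
      fun_prop
    · simp [Function.uncurry, Complex.norm_exp]
  unfold fourierT
  simp_rw [← integral_const_mul]
  rw [integral_integral_swap hp2]
  congr 1
  ext y
  have hF := fourierIntegral_gaussian (b := (s : ℂ)) (by simpa using hs) (-(y : ℂ))
  have h1 : (((π / s) ^ (1 / 2 : ℝ) * Real.exp (-(y ^ 2 * (1 / (4 * s)))) : ℝ) : ℂ)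
      = (π / (s : ℂ)) ^ (1 / 2 : ℂ) * Complex.exp (-(-(y : ℂ)) ^ 2 / (4 * (s : ℂ))) := by
    rw [Complex.ofReal_mul, Complex.ofReal_cpow (by positivity), Complex.ofReal_exp]
    push_cast
    congr 2
    ring
  rw [h1, ← hF, ← integral_mul_const]
  congr 1
  ext x
  push_cast
  rw [← mul_assoc, mul_comm (Complex.exp _) (Complex.exp _)]
  congr 3 <;> ring

lemma aux_change {α : ℝ} (f : ℝ → ℂ) :
    ∫ t in Set.Ioi (0 : ℝ), ((t ^ (α / 2 - 1) : ℝ) : ℂ) * f t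
     = ∫ s in Set.Ioi (0 : ℝ), (((4 : ℝ) ^ (-(α / 2)) * s ^ (-(α / 2) - 1) : ℝ) : ℂ)
        * f (1 / (4 * s)) := by
  rw [← integral_comp_rpow_Ioi _ (show (-1 : ℝ) ≠ 0 by norm_num)]
  have h := integral_comp_mul_left_Ioi (fun x : ℝ => (|(-1 : ℝ)| * x ^ (-1 - 1 : ℝ)) •
    ((((x ^ (-1 : ℝ)) ^ (α / 2 - 1) : ℝ) : ℂ) * f (x ^ (-1 : ℝ)))) 0 (show (0 : ℝ) < 4 by norm_num)
  rw [mul_zero] at h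
  rw [← smul_inv_smul₀ (show (4 : ℝ) ≠ 0 by norm_num) (∫ x in Set.Ioi (0 : ℝ), _), ← h,
    ← integral_smul]
  refine setIntegral_congr_fun measurableSet_Ioi fun s hs => ?_
  have hs' : (0 : ℝ) < s := hs
  simp only [Complex.real_smul]
  rw [← mul_assoc, ← mul_assoc, ← Complex.ofReal_mul, ← Complex.ofReal_mul, rpow_neg_one,
    one_div]
  congr 2
  have e : (4 * s)⁻¹ ^ (α / 2 - 1) = (4 * s) ^ (-(α / 2 - 1)) := by
    rw [rpow_neg (by positivity), inv_rpow (by positivity)]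
  rw [e, abs_neg, abs_one, one_mul, mul_assoc, ← rpow_add (by positivity),
    mul_rpow (by norm_num) hs'.le, ← mul_assoc]
  congr 1
  · nth_rewrite 1 [← rpow_one (4 : ℝ)]
    rw [← rpow_add (by norm_num)]
    congr 1
    ring
  · congr 1
    ring

lemma aux_F (φ : SchwartzMap ℝ ℝ) :
    Continuous (fourierT φ) ∧ Integrable (fourierT φ) ∧
      ∀ x, ‖fourierT φ x‖ ≤ ∫ y, ‖φ y‖ := by
  let ψ : SchwartzMap ℝ ℂ := SchwartzMap.postcompCLM (𝕜 := ℝ) Complex.ofRealCLM φ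
  have hψ : ∀ y, ψ y = (φ y : ℂ) := fun y => rfl
  have e : fourierT φ = fun x => (FourierTransform.fourier ψ : SchwartzMap ℝ ℂ) ((2 * π)⁻¹ * x) := by
    ext x
    rw [SchwartzMap.fourier_coe, Real.fourier_real_eq_integral_exp_smul]
    unfold fourierT
    congr 1
    ext y
    rw [hψ, smul_eq_mul]
    congr 2
    push_cast
    field_simp
  refine ⟨?_, ?_, fun x => ?_⟩
  · rw [e]; exact (SchwartzMap.continuous _).comp (by fun_prop)
  · rw [e]
    exact (SchwartzMap.integrable _).comp_mul_left' (by positivity)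
  · unfold fourierT
    refine (norm_integral_le_integral_norm _).trans (le_of_eq ?_)
    simp [Complex.norm_exp]

/-- The Fourier transform of the Riesz kernel `R_{1,α}(x) = C_{1,α}|x|^{-(1-α)}`, in the sense
of tempered distributions, is `g(ξ) = |ξ|^{-α}`: for every Schwartz function `φ`,
`∫ C_{1,α}|x|^{-(1-α)} (𝓕φ)(x) dx = ∫ |ξ|^{-α} φ(ξ) dξ`. -/
theorem stmt_5 (α : ℝ) (hα1 : 0 < α) (hα2 : α < 1) (φ : SchwartzMap ℝ ℝ) :
    (∫ x : ℝ, ((rieszConst α * |x| ^ (-(1 - α)) : ℝ) : ℂ) * fourierT (fun y => φ y) x)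
      = ((∫ ξ : ℝ, |ξ| ^ (-α) * φ ξ : ℝ) : ℂ) := by
  obtain ⟨hFc, hFi, hFb⟩ := aux_F φ
  have hG1 : 0 < Real.Gamma (α / 2) := Real.Gamma_pos_of_pos (by linarith)
  have A := aux_sub (β := 1 - α) (by linarith) (by linarith) hFc hFi hFb
  obtain ⟨M, hM⟩ : ∃ M, ∀ x, ‖(φ x : ℂ)‖ ≤ M :=
    ⟨_, fun x => by simpa using SchwartzMap.norm_le_seminorm ℝ φ x⟩
  have B := aux_sub (β := α) hα1 hα2 (G := fun x => (φ x : ℂ)) (by fun_prop)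
    φ.integrable.ofReal hM
  rw [aux_change] at B
  have key : (∫ x : ℝ, ((|x| ^ (-(1 - α)) * Real.Gamma ((1 - α) / 2) : ℝ) : ℂ) * fourierT φ x)
      = ((π ^ (1 / 2 : ℝ) * 2 ^ α : ℝ) : ℂ) *
        ∫ x : ℝ, ((|x| ^ (-α) * Real.Gamma (α / 2) : ℝ) : ℂ) * (φ x : ℂ) := by
    rw [A, B, ← integral_const_mul]
    refine setIntegral_congr_fun measurableSet_Ioi fun s hs => ?_
    have hs' : (0 : ℝ) < s := hs
    rw [aux_parseval φ.continuous φ.integrable hs']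
    simp_rw [Complex.ofReal_mul ((π / s) ^ (1 / 2 : ℝ)), mul_assoc]
    rw [integral_const_mul, ← mul_assoc, ← mul_assoc, ← Complex.ofReal_mul,
      ← Complex.ofReal_mul]
    congr 2
    rw [div_rpow pi_pos.le hs'.le, show (4 : ℝ) = 2 ^ (2 : ℝ) by norm_num, ← rpow_mul (by norm_num),
      show (2 : ℝ) * -(α / 2) = -α by ring, rpow_neg (by norm_num) α]
    have h2 : (0 : ℝ) < 2 ^ α := by positivity
    have e : s ^ ((1 - α) / 2 - 1) = s ^ (-(α / 2) - 1) * s ^ (1 / 2 : ℝ) := by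
      rw [← rpow_add hs']
      congr 1
      ring
    rw [e]
    field_simp
  have L : (∫ x : ℝ, ((rieszConst α * |x| ^ (-(1 - α)) : ℝ) : ℂ) * fourierT (fun y => φ y) x)
      = ((π ^ (-(1 / 2) : ℝ) * 2 ^ (-α) / Real.Gamma (α / 2) : ℝ) : ℂ) *
      ∫ x : ℝ, ((|x| ^ (-(1 - α)) * Real.Gamma ((1 - α) / 2) : ℝ) : ℂ) * fourierT φ x := by
    rw [← integral_const_mul]
    congr 1
    ext x
    rw [← mul_assoc, ← Complex.ofReal_mul]
    congr 2
    unfold rieszConst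
    ring
  rw [L, key, ← mul_assoc, ← Complex.ofReal_mul, ← integral_const_mul, ← integral_complex_ofReal]
  congr 1
  ext x
  rw [← mul_assoc, ← Complex.ofReal_mul, ← Complex.ofReal_mul]
  congr 1
  rw [rpow_neg pi_pos.le, rpow_neg (by norm_num : (0 : ℝ) ≤ 2)]
  have h2 : (0 : ℝ) < 2 ^ α := by positivity
  have h3 : (0 : ℝ) < π ^ (1 / 2 : ℝ) := by positivity
  field_simp
end

section
/- Fix t > 0 and H ∈ (1/2, 1). For θ > 0 let I_θ(y) = ∫_{−θ}^{θ} G_t(x − y) dx, where G_t(x) = (1/2)·1_{{|x| ≤ t}}. Then for all θ > 0, w > 0, α_H ∫_ℝ ∫_ℝ I_θ(y) I_w(z) |y − z|^{2H−2} dy dz = 4 c_H ∫_ℝ sin²(tξ) sin(θξ) sin(wξ) |ξ|^{−3−2H} dξ, where α_H = H(2H−1) and c_H = Γ(2H+1) sin(πH)/(2π). -/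
open MeasureTheory Real

/-- The fundamental solution of the one-dimensional wave equation:
`G_t(x) = (1/2) 1_{{|x| ≤ t}}`. -/
noncomputable def waveG (t x : ℝ) : ℝ := if |x| ≤ t then 1 / 2 else 0

/-- `I_θ(y) = ∫_{-θ}^{θ} G_t(x - y) dx`. -/
noncomputable def Ifun (t θ y : ℝ) : ℝ := ∫ x in (-θ)..θ, waveG t (x - y)

lemma aux_integrable_abs {f : ℝ → ℝ} (hf : IntegrableOn f (Set.Ioi 0)) :
    Integrable (fun x => f |x|) := by
  have hf' : IntegrableOn (fun x => f |x|) (Set.Ioi 0) := by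
    refine hf.congr_fun (fun x hx => ?_) measurableSet_Ioi
    rw [abs_of_pos (by exact hx)]
  have int_Iic : IntegrableOn (fun x ↦ f |x|) (Set.Iic 0) := by
    rw [← Measure.map_neg_eq_self (volume : Measure ℝ)]
    let m : MeasurableEmbedding fun x : ℝ => -x := (Homeomorph.neg ℝ).measurableEmbedding
    rw [m.integrableOn_map_iff]
    simp_rw [Function.comp_def, abs_neg, Set.neg_preimage, Set.neg_Iic, neg_zero]
    exact Iff.mpr integrableOn_Ici_iff_integrableOn_Ioi hf'
  rw [← integrableOn_univ, ← Set.Iic_union_Ioi (a := (0:ℝ))]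
  exact int_Iic.union hf'

lemma aux_gauss (s x : ℝ) (hs : 0 < s) :
    ∫ ξ : ℝ, exp (-(1 / (4 * s)) * ξ ^ 2) * cos (x * ξ) = √(4 * π * s) * exp (-(x ^ 2 * s)) := by
  have hb : 0 < ((1 / (4 * s) : ℝ) : ℂ).re := by
    rw [Complex.ofReal_re]; positivity
  have h := fourierIntegral_gaussian hb (x : ℂ)
  have hint : Integrable (fun ξ : ℝ => Complex.exp (Complex.I * x * ξ) *
      Complex.exp (-((1 / (4 * s) : ℝ) : ℂ) * ξ ^ 2)) := by
    have := integrable_cexp_quadratic hb (Complex.I * x) 0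
    refine this.congr (Filter.Eventually.of_forall fun ξ => ?_)
    simp only
    rw [← Complex.exp_add]; congr 1; ring
  have h2 := integral_re hint
  rw [h] at h2
  have e1 : ∀ ξ : ℝ, RCLike.re (Complex.exp (Complex.I * x * ξ) *
      Complex.exp (-((1 / (4 * s) : ℝ) : ℂ) * ξ ^ 2)) =
      exp (-(1 / (4 * s)) * ξ ^ 2) * cos (x * ξ) := by
    intro ξ
    have : Complex.exp (-((1 / (4 * s) : ℝ) : ℂ) * ξ ^ 2) =
        ((exp (-(1 / (4 * s)) * ξ ^ 2) : ℝ) : ℂ) := by push_cast; rfl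
    rw [this]
    have h3 : Complex.I * x * ξ = ((x * ξ : ℝ) : ℂ) * Complex.I := by push_cast; ring
    rw [h3]
    change (Complex.exp _ * _).re = _
    rw [Complex.re_mul_ofReal, Complex.exp_ofReal_mul_I_re]; ring
  simp_rw [e1] at h2
  rw [h2]
  have h4 : ((π : ℂ) / ((1 / (4 * s) : ℝ) : ℂ)) ^ (1 / 2 : ℂ) = ((√(4 * π * s) : ℝ) : ℂ) := by
    have : (π : ℂ) / ((1 / (4 * s) : ℝ) : ℂ) = ((4 * π * s : ℝ) : ℂ) := by
      push_cast; field_simp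
    rw [this, Real.sqrt_eq_rpow, Complex.ofReal_cpow (by positivity)]
    push_cast; rfl
  have h5 : Complex.exp (-(x : ℂ) ^ 2 / (4 * ((1 / (4 * s) : ℝ) : ℂ))) =
      ((exp (-(x ^ 2 * s)) : ℝ) : ℂ) := by
    push_cast; congr 1;
    have : (s:ℂ) ≠ 0 := by exact_mod_cast hs.ne'
    field_simp
  rw [h4, h5, ← Complex.ofReal_mul]
  exact Complex.ofReal_re _

/-- subordination formula -/
lemma aux_sub1 (H x : ℝ) (h2 : H < 1) (hx : x ≠ 0) :
    ∫ s in Set.Ioi (0:ℝ), s ^ (-H) * exp (-(x ^ 2 * s)) = Gamma (1 - H) * |x| ^ (2 * H - 2) := by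
  have h := integral_rpow_mul_exp_neg_mul_Ioi (a := 1 - H) (r := x ^ 2) (by linarith) (by positivity)
  rw [show (1 - H - 1 : ℝ) = -H by ring] at h
  rw [h, mul_comm]
  congr 1
  rw [← sq_abs, one_div, inv_rpow (by positivity), ← rpow_neg (by positivity), ← rpow_natCast,
    ← rpow_mul (abs_nonneg x)]
  congr 1; push_cast; ring

lemma aux_sub2 (H ξ : ℝ) (h1 : 1 / 2 < H) (hξ : ξ ≠ 0) :
    ∫ s in Set.Ioi (0:ℝ), s ^ (-H - 1 / 2) * exp (-(1 / (4 * s)) * ξ ^ 2) =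
      Gamma (H - 1 / 2) * 4 ^ (H - 1 / 2) * |ξ| ^ (1 - 2 * H) := by
  have h := integral_rpow_mul_exp_neg_mul_Ioi (a := H - 1 / 2) (r := ξ ^ 2 / 4) (by linarith)
    (by positivity)
  rw [← integral_comp_rpow_Ioi _ (show (-1:ℝ) ≠ 0 by norm_num)] at h
  have e : ∀ s ∈ Set.Ioi (0:ℝ), (|(-1:ℝ)| * s ^ ((-1:ℝ) - 1)) •
      ((s ^ (-1:ℝ)) ^ (H - 1 / 2 - 1) * exp (-(ξ ^ 2 / 4 * s ^ (-1:ℝ)))) =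
      s ^ (-H - 1 / 2) * exp (-(1 / (4 * s)) * ξ ^ 2) := by
    intro s hs
    have hs : 0 < s := hs
    rw [← rpow_mul hs.le, smul_eq_mul, ← mul_assoc, abs_neg, abs_one, one_mul, ← rpow_add hs,
      rpow_neg_one]
    congr 2
    · ring
    · field_simp
  rw [setIntegral_congr_fun measurableSet_Ioi e] at h
  rw [h, one_div, inv_rpow (by positivity), div_rpow (by positivity) (by positivity), inv_div,
    ← sq_abs, div_eq_mul_inv, ← rpow_neg (by positivity), ← rpow_natCast, ← rpow_mul (abs_nonneg _)]
  rw [show ((2:ℕ):ℝ) * -(H - 1 / 2) = 1 - 2 * H by push_cast; ring]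
  ring

lemma aux_const (H : ℝ) (h1 : 1 / 2 < H) (h2 : H < 1) :
    H * (2 * H - 1) * (Gamma (H - 1 / 2) * 4 ^ (H - 1 / 2) / √(4 * π)) =
      Gamma (2 * H + 1) * Real.sin (π * H) / (2 * π) * Gamma (1 - H) := by
  have d := Real.Gamma_mul_Gamma_add_half (H - 1 / 2)
  rw [show H - 1 / 2 + 1 / 2 = H by ring, show 2 * (H - 1 / 2) = 2 * H - 1 by ring] at d
  have r := Real.Gamma_mul_Gamma_one_sub H
  have hs : 0 < sin (π * H) := by
    apply sin_pos_of_pos_of_lt_pi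
    · have := pi_pos; positivity
    · nlinarith [pi_pos]
  have hG : 0 < Gamma H := Gamma_pos_of_pos (by linarith)
  have g1 : Gamma (2 * H + 1) = 2 * H * ((2 * H - 1) * Gamma (2 * H - 1)) := by
    rw [Gamma_add_one (by linarith)]; congr 1
    have := Gamma_add_one (s := 2 * H - 1) (by linarith)
    rwa [sub_add_cancel] at this
  have hsq : √(4 * π) = 2 * √π := by
    rw [sqrt_mul (by norm_num), show (4:ℝ) = 2 ^ 2 by norm_num, sqrt_sq (by norm_num)]
  have h4 : (4:ℝ) ^ (H - 1 / 2) * 2 ^ (1 - (2 * H - 1)) = 2 := by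
    rw [show (4:ℝ) = 2 ^ (2:ℝ) by norm_num, ← rpow_mul (by norm_num), ← rpow_add (by norm_num)]
    rw [show 2 * (H - 1 / 2) + (1 - (2 * H - 1)) = 1 by ring, rpow_one]
  have hp : 0 < √π := sqrt_pos.2 pi_pos
  apply mul_left_cancel₀ hG.ne'
  have A : Gamma H * (H * (2 * H - 1) * (Gamma (H - 1 / 2) * 4 ^ (H - 1 / 2) / √(4 * π))) =
      H * (2 * H - 1) * ((Gamma (H - 1 / 2) * Gamma H) * 4 ^ (H - 1 / 2) / (2 * √π)) := by
    rw [hsq]; ring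
  have B : Gamma H * (Gamma (2 * H + 1) * Real.sin (π * H) / (2 * π) * Gamma (1 - H)) =
      (Gamma H * Gamma (1 - H)) * Gamma (2 * H + 1) * Real.sin (π * H) / (2 * π) := by ring
  rw [A, B, d, r, g1]
  have C : Gamma (2 * H - 1) * 2 ^ (1 - (2 * H - 1)) * √π * 4 ^ (H - 1 / 2) / (2 * √π) =
      Gamma (2 * H - 1) := by
    rw [show Gamma (2 * H - 1) * 2 ^ (1 - (2 * H - 1)) * √π * 4 ^ (H - 1 / 2) =
      Gamma (2 * H - 1) * √π * (4 ^ (H - 1 / 2) * 2 ^ (1 - (2 * H - 1))) by ring, h4]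
    field_simp
  rw [C]
  have := pi_pos
  generalize sin (π * H) = q at hs
  field_simp

lemma aux_kernel (H R C : ℝ) (h1 : 1 / 2 < H) (f g : ℝ → ℝ) (hf : Measurable f)
    (hg : Integrable g) (hC : ∀ y, |f y| ≤ C) (hfR : ∀ y, R < |y| → f y = 0)
    (hgR : ∀ y, R < |y| → g y = 0) :
    Integrable (fun p : ℝ × ℝ => f p.1 * g p.2 * |p.1 - p.2| ^ (2 * H - 2))
      (volume.prod volume) := by
  have hk : IntegrableOn ((Set.Iic (2 * R)).indicator fun r : ℝ => r ^ (2 * H - 2)) (Set.Ioi 0) := by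
    rw [IntegrableOn, integrable_indicator_iff measurableSet_Iic, IntegrableOn,
      Measure.restrict_restrict measurableSet_Iic, Set.Iic_inter_Ioi]
    rcases le_or_gt (2 * R) 0 with h | h
    · rw [Set.Ioc_eq_empty (by linarith)]; simp
    · have := intervalIntegral.intervalIntegrable_rpow' (a := 0) (b := 2 * R) (r := 2 * H - 2)
        (by linarith)
      rwa [intervalIntegrable_iff_integrableOn_Ioc_of_le h.le] at this
  have hk' := aux_integrable_abs hk
  have h := Integrable.convolution_integrand (ContinuousLinearMap.mul ℝ ℝ) hg hk'
  have h3 := h.bdd_mul (f := fun p : ℝ × ℝ => f p.1) (c := C)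
    (hf.comp measurable_fst).aestronglyMeasurable (Filter.Eventually.of_forall fun p => hC p.1)
  refine h3.congr (Filter.Eventually.of_forall fun p => ?_)
  simp only [ContinuousLinearMap.mul_apply']
  by_cases hy : R < |p.1|
  · simp [hfR _ hy]
  by_cases hz : R < |p.2|
  · simp [hgR _ hz]
  rw [Set.indicator_of_mem]
  · ring
  · have := abs_sub p.1 p.2
    simp only [Set.mem_Iic]; linarith

lemma aux_ne : ∀ᵐ p : ℝ × ℝ ∂(volume.prod volume), p.1 - p.2 ≠ 0 := by
  have hm : MeasurableSet {p : ℝ × ℝ | p.1 - p.2 ≠ 0} :=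
    (measurableSet_eq_fun (measurable_fst.sub measurable_snd) measurable_const).compl
  rw [Measure.ae_prod_iff_ae_ae hm]
  refine Filter.Eventually.of_forall fun y => ?_
  filter_upwards [Measure.ae_ne volume y] with z hz
  exact sub_ne_zero.2 (Ne.symm hz)

lemma aux_main (H : ℝ) (h1 : 1 / 2 < H) (h2 : H < 1) (f g P : ℝ → ℝ)
    (hf : Integrable f) (hg : Integrable g)
    (hK : Integrable (fun p : ℝ × ℝ => f p.1 * g p.2 * |p.1 - p.2| ^ (2 * H - 2))
      (volume.prod volume))
    (hP : ∀ ξ ≠ 0, ∫ p : ℝ × ℝ, f p.1 * g p.2 * cos ((p.1 - p.2) * ξ) ∂(volume.prod volume) = P ξ)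
    (hPm : Measurable P) (hPi : Integrable fun ξ => P ξ * |ξ| ^ (1 - 2 * H)) :
    Gamma (1 - H) * ∫ p : ℝ × ℝ, f p.1 * g p.2 * |p.1 - p.2| ^ (2 * H - 2) ∂(volume.prod volume)
      = (Gamma (H - 1 / 2) * 4 ^ (H - 1 / 2) / √(4 * π)) * ∫ ξ, P ξ * |ξ| ^ (1 - 2 * H) := by
  have hfg : Integrable (fun p : ℝ × ℝ => f p.1 * g p.2) (volume.prod volume) := hf.mul_prod hg
  have hG1 : 0 < Gamma (1 - H) := Gamma_pos_of_pos (by linarith)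
  have hG2 : 0 < Gamma (H - 1 / 2) := Gamma_pos_of_pos (by linarith)
  have i1 : Integrable (Function.uncurry fun (s : ℝ) (p : ℝ × ℝ) =>
      f p.1 * g p.2 * (s ^ (-H) * exp (-((p.1 - p.2) ^ 2 * s))))
      ((volume.restrict (Set.Ioi 0)).prod (volume.prod volume)) := by
    rw [integrable_prod_iff']
    · constructor
      · filter_upwards [aux_ne] with p hp
        simp only [Function.uncurry]
        apply Integrable.const_mul
        by_contra hc
        have := aux_sub1 H _ h2 hp
        rw [integral_undef hc] at this
        have : 0 < Gamma (1 - H) * |p.1 - p.2| ^ (2 * H - 2) := by positivity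
        linarith
      · refine (hK.norm.const_mul (Gamma (1 - H))).congr ?_
        filter_upwards [aux_ne] with p hp
        simp only [Function.uncurry, norm_mul _ (_ * _)]
        rw [integral_const_mul]
        have : ∫ s in Set.Ioi (0:ℝ), ‖s ^ (-H) * exp (-((p.1 - p.2) ^ 2 * s))‖ =
            Gamma (1 - H) * |p.1 - p.2| ^ (2 * H - 2) := by
          rw [← aux_sub1 H _ h2 hp]
          refine setIntegral_congr_fun measurableSet_Ioi fun s hs => ?_
          have hs : 0 < s := hs
          rw [norm_of_nonneg (by positivity)]
        rw [this, norm_mul, norm_of_nonneg (r := |p.1 - p.2| ^ (2 * H - 2)) (by positivity)]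
        ring
    · refine AEStronglyMeasurable.mul (hfg.aestronglyMeasurable.comp_snd) ?_
      apply Measurable.aestronglyMeasurable
      fun_prop
  have e1 := integral_integral_swap i1
  have e1' : ∫ p : ℝ × ℝ, (∫ s in Set.Ioi (0:ℝ),
      f p.1 * g p.2 * (s ^ (-H) * exp (-((p.1 - p.2) ^ 2 * s)))) ∂(volume.prod volume) =
      Gamma (1 - H) *
        ∫ p : ℝ × ℝ, f p.1 * g p.2 * |p.1 - p.2| ^ (2 * H - 2) ∂(volume.prod volume) := by
    rw [← integral_const_mul]
    apply integral_congr_ae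
    filter_upwards [aux_ne] with p hp
    rw [integral_const_mul, aux_sub1 H _ h2 hp]; ring
  rw [← e1', ← e1]
  have e2 : ∀ s ∈ Set.Ioi (0:ℝ), ∫ p : ℝ × ℝ, f p.1 * g p.2 *
      (s ^ (-H) * exp (-((p.1 - p.2) ^ 2 * s))) ∂(volume.prod volume) =
      (1 / √(4 * π)) * ∫ ξ, P ξ * (s ^ (-H - 1 / 2) * exp (-(1 / (4 * s)) * ξ ^ 2)) := by
    intro s hs
    have hs : 0 < s := hs
    have hgi : Integrable fun ξ : ℝ => exp (-(1 / (4 * s)) * ξ ^ 2) :=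
      integrable_exp_neg_mul_sq (by positivity)
    have i2 : Integrable (Function.uncurry fun (p : ℝ × ℝ) (ξ : ℝ) =>
        f p.1 * g p.2 * exp (-(1 / (4 * s)) * ξ ^ 2) * cos ((p.1 - p.2) * ξ))
        ((volume.prod volume).prod volume) := by
      have := hfg.mul_prod hgi
      refine Integrable.mul_bdd (c := 1) this ?_ ?_
      · apply Continuous.aestronglyMeasurable; fun_prop
      · exact Filter.Eventually.of_forall fun q => abs_cos_le_one _
    have sw := integral_integral_swap i2
    have l : ∀ p : ℝ × ℝ, ∫ ξ, f p.1 * g p.2 * exp (-(1 / (4 * s)) * ξ ^ 2) *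
        cos ((p.1 - p.2) * ξ) = f p.1 * g p.2 * (√(4 * π * s) * exp (-((p.1 - p.2) ^ 2 * s))) := by
      intro p
      simp_rw [mul_assoc (f p.1 * g p.2)]
      rw [integral_const_mul, aux_gauss _ _ hs]
    have r : ∫ ξ, ∫ p : ℝ × ℝ, f p.1 * g p.2 * exp (-(1 / (4 * s)) * ξ ^ 2) *
        cos ((p.1 - p.2) * ξ) ∂(volume.prod volume) =
        ∫ ξ, P ξ * exp (-(1 / (4 * s)) * ξ ^ 2) := by
      apply integral_congr_ae
      filter_upwards [Measure.ae_ne volume (0:ℝ)] with ξ hξ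
      rw [← hP ξ hξ, ← integral_mul_const]
      congr 1; ext p; ring
    simp_rw [l] at sw
    rw [r] at sw
    have a : ∀ p : ℝ × ℝ, f p.1 * g p.2 * (s ^ (-H) * exp (-((p.1 - p.2) ^ 2 * s))) =
        (s ^ (-H) / √(4 * π * s)) *
          (f p.1 * g p.2 * (√(4 * π * s) * exp (-((p.1 - p.2) ^ 2 * s)))) := by
      intro p
      have : 0 < √(4 * π * s) := sqrt_pos.2 (by positivity)
      field_simp
    have b : ∀ ξ, P ξ * (s ^ (-H - 1 / 2) * exp (-(1 / (4 * s)) * ξ ^ 2)) =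
        s ^ (-H - 1 / 2) * (P ξ * exp (-(1 / (4 * s)) * ξ ^ 2)) := fun ξ => by ring
    simp_rw [a, b]
    rw [integral_const_mul, integral_const_mul, sw, sqrt_mul (by positivity), rpow_sub hs,
      ← sqrt_eq_rpow, ← mul_assoc]
    congr 1
    field_simp
  rw [setIntegral_congr_fun measurableSet_Ioi e2, integral_const_mul]
  have i3 : Integrable (Function.uncurry fun (s ξ : ℝ) =>
      P ξ * (s ^ (-H - 1 / 2) * exp (-(1 / (4 * s)) * ξ ^ 2)))
      ((volume.restrict (Set.Ioi 0)).prod volume) := by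
    rw [integrable_prod_iff']
    · constructor
      · filter_upwards [Measure.ae_ne volume (0:ℝ)] with ξ hξ
        simp only [Function.uncurry]
        apply Integrable.const_mul
        by_contra hc
        have := aux_sub2 H _ h1 hξ
        rw [integral_undef hc] at this
        have : 0 < Gamma (H - 1 / 2) * 4 ^ (H - 1 / 2) * |ξ| ^ (1 - 2 * H) := by positivity
        linarith
      · refine (hPi.norm.const_mul (Gamma (H - 1 / 2) * 4 ^ (H - 1 / 2))).congr ?_
        filter_upwards [Measure.ae_ne volume (0:ℝ)] with ξ hξ
        simp only [Function.uncurry, norm_mul _ (_ * _)]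
        rw [integral_const_mul]
        have : ∫ s in Set.Ioi (0:ℝ), ‖s ^ (-H - 1 / 2) * exp (-(1 / (4 * s)) * ξ ^ 2)‖ =
            Gamma (H - 1 / 2) * 4 ^ (H - 1 / 2) * |ξ| ^ (1 - 2 * H) := by
          rw [← aux_sub2 H _ h1 hξ]
          refine setIntegral_congr_fun measurableSet_Ioi fun s hs => ?_
          have hs : 0 < s := hs
          rw [norm_of_nonneg (by positivity)]
        rw [this, norm_mul, norm_of_nonneg (r := |ξ| ^ (1 - 2 * H)) (by positivity)]
        ring
    · apply Measurable.aestronglyMeasurable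
      unfold Function.uncurry
      fun_prop
  rw [integral_integral_swap i3, ← integral_const_mul, ← integral_const_mul]
  apply integral_congr_ae
  filter_upwards [Measure.ae_ne volume (0:ℝ)] with ξ hξ
  rw [integral_const_mul, aux_sub2 H _ h1 hξ]
  ring

lemma aux_waveG_meas (t : ℝ) : Measurable (waveG t) := by
  unfold waveG
  exact Measurable.ite (measurableSet_le measurable_norm measurable_const)
    measurable_const measurable_const

lemma aux_waveG_int (t : ℝ) : Integrable (waveG t) := by
  have : waveG t = (Set.Icc (-t) t).indicator fun _ => (1 / 2 : ℝ) := by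
    ext x
    simp only [waveG, Set.indicator, Set.mem_Icc, abs_le]
  rw [this, integrable_indicator_iff measurableSet_Icc]
  simp

lemma aux_waveG_phi (t x : ℝ) (ht : 0 < t) (φ : ℝ → ℝ) :
    ∫ y, waveG t (x - y) * φ y = 1 / 2 * ∫ y in (x - t)..(x + t), φ y := by
  have : (fun y => waveG t (x - y) * φ y) =
      (Set.Icc (x - t) (x + t)).indicator fun y => 1 / 2 * φ y := by
    ext y
    simp only [waveG, Set.indicator, Set.mem_Icc, abs_le]
    have : (-t ≤ x - y ∧ x - y ≤ t) ↔ (x - t ≤ y ∧ y ≤ x + t) := by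
      constructor <;> rintro ⟨a, b⟩ <;> constructor <;> linarith
    simp only [this]
    split_ifs <;> simp
  rw [this, integral_indicator measurableSet_Icc, integral_Icc_eq_integral_Ioc,
    ← intervalIntegral.integral_of_le (by linarith), intervalIntegral.integral_const_mul]

lemma aux_Ifun_meas (t θ : ℝ) (hθ : 0 < θ) : Measurable (Ifun t θ) := by
  have : Ifun t θ = fun y => ∫ x in Set.Ioc (-θ) θ, waveG t (x - y) := by
    ext y; rw [Ifun, intervalIntegral.integral_of_le (by linarith)]
  rw [this]
  have h : StronglyMeasurable (Function.uncurry fun y x : ℝ => waveG t (x - y)) :=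
    ((aux_waveG_meas t).comp (measurable_snd.sub measurable_fst)).stronglyMeasurable
  exact h.integral_prod_right.measurable

lemma aux_Ifun_bound (t θ y : ℝ) : |Ifun t θ y| ≤ 1 / 2 * |θ - -θ| := by
  rw [Ifun, ← norm_eq_abs (∫ x in (-θ)..θ, waveG t (x - y))]
  refine intervalIntegral.norm_integral_le_of_norm_le_const fun x _ => ?_
  unfold waveG
  split_ifs <;> norm_num

lemma aux_Ifun_supp (t θ y : ℝ) (hθ : 0 < θ) (hy : θ + t < |y|) : Ifun t θ y = 0 := by
  rw [Ifun, intervalIntegral.integral_congr (g := fun _ => 0)]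
  · simp
  · intro x hx
    rw [Set.uIcc_of_le (by linarith)] at hx
    have h1 : |x| ≤ θ := abs_le.2 hx
    have h2 : |y| - |x| ≤ |y - x| := abs_sub_abs_le_abs_sub y x
    rw [abs_sub_comm] at h2
    simp only [waveG]
    rw [if_neg]
    linarith

lemma aux_Ifun_int (t θ : ℝ) (hθ : 0 < θ) : Integrable (Ifun t θ) := by
  have : Ifun t θ = (Set.Icc (-(θ + t)) (θ + t)).indicator (Ifun t θ) := by
    ext y
    by_cases hy : y ∈ Set.Icc (-(θ + t)) (θ + t)
    · rw [Set.indicator_of_mem hy]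
    · rw [Set.indicator_of_notMem hy]
      refine aux_Ifun_supp t θ y hθ ?_
      by_contra hc
      exact hy (abs_le.1 (not_lt.1 hc))
  rw [this, integrable_indicator_iff measurableSet_Icc]
  exact Measure.integrableOn_of_bounded (M := 1 / 2 * |θ - -θ|) (by simp)
    (aux_Ifun_meas t θ hθ).aestronglyMeasurable
    (Filter.Eventually.of_forall fun y => aux_Ifun_bound t θ y)

lemma aux_Ifun_phi (t θ : ℝ) (ht : 0 < t) (hθ : 0 < θ) (φ : ℝ → ℝ) (hφ : Measurable φ)
    (hb : ∀ y, |φ y| ≤ 1) :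
    ∫ y, Ifun t θ y * φ y = ∫ x in (-θ)..θ, 1 / 2 * ∫ y in (x - t)..(x + t), φ y := by
  have hi : Integrable (Function.uncurry fun (y x : ℝ) => waveG t (x - y) * φ y)
      (volume.prod (volume.restrict (Set.Ioc (-θ) θ))) := by
    have h1 : Integrable (fun _ : ℝ => (1:ℝ)) (volume.restrict (Set.Ioc (-θ) θ)) := by simp
    have h := Integrable.convolution_integrand (ContinuousLinearMap.mul ℝ ℝ) h1 (aux_waveG_int t)
    have h3 := h.mul_bdd (g := fun p : ℝ × ℝ => φ p.1) (c := 1)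
      (hφ.comp measurable_fst).aestronglyMeasurable (Filter.Eventually.of_forall fun p => hb p.1)
    refine h3.congr (Filter.Eventually.of_forall fun p => ?_)
    simp only [ContinuousLinearMap.mul_apply', Function.uncurry, waveG, one_mul]
    rw [abs_sub_comm]
  have h := integral_integral_swap hi
  simp_rw [aux_waveG_phi t _ ht, integral_mul_const] at h
  rw [intervalIntegral.integral_of_le (by linarith), ← h]
  congr 1; ext y
  rw [Ifun, intervalIntegral.integral_of_le (by linarith)]

lemma aux_Ifun_cos (t θ ξ : ℝ) (ht : 0 < t) (hθ : 0 < θ) (hξ : ξ ≠ 0) :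
    ∫ y, Ifun t θ y * cos (y * ξ) = 2 * sin (t * ξ) * sin (θ * ξ) / ξ ^ 2 := by
  rw [aux_Ifun_phi t θ ht hθ _ (by fun_prop) fun y => abs_cos_le_one _]
  have : ∀ x : ℝ, 1 / 2 * ∫ y in (x - t)..(x + t), cos (y * ξ) =
      sin (t * ξ) / ξ * cos (x * ξ) := by
    intro x
    rw [intervalIntegral.integral_comp_mul_right _ hξ, integral_cos, add_mul, sub_mul, sin_add,
      sin_sub, smul_eq_mul]
    field_simp; ring
  simp_rw [this]
  rw [intervalIntegral.integral_const_mul, intervalIntegral.integral_comp_mul_right _ hξ,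
    integral_cos, neg_mul, sin_neg, smul_eq_mul]
  field_simp; ring

lemma aux_Ifun_sin (t θ ξ : ℝ) (ht : 0 < t) (hθ : 0 < θ) (hξ : ξ ≠ 0) :
    ∫ y, Ifun t θ y * sin (y * ξ) = 0 := by
  rw [aux_Ifun_phi t θ ht hθ _ (by fun_prop) fun y => abs_sin_le_one _]
  have : ∀ x : ℝ, 1 / 2 * ∫ y in (x - t)..(x + t), sin (y * ξ) =
      sin (t * ξ) / ξ * sin (x * ξ) := by
    intro x
    rw [intervalIntegral.integral_comp_mul_right _ hξ, integral_sin, add_mul, sub_mul, cos_add,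
      cos_sub, smul_eq_mul]
    field_simp; ring
  simp_rw [this]
  rw [intervalIntegral.integral_const_mul, intervalIntegral.integral_comp_mul_right _ hξ,
    integral_sin, neg_mul, cos_neg, smul_eq_mul]
  simp

lemma aux_P (t θ w ξ : ℝ) (ht : 0 < t) (hθ : 0 < θ) (hw : 0 < w) (hξ : ξ ≠ 0) :
    ∫ p : ℝ × ℝ, Ifun t θ p.1 * Ifun t w p.2 * cos ((p.1 - p.2) * ξ) ∂(volume.prod volume) =
      4 * (sin (t * ξ) ^ 2 * sin (θ * ξ) * sin (w * ξ)) / ξ ^ 4 := by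
  have e : ∀ p : ℝ × ℝ, Ifun t θ p.1 * Ifun t w p.2 * cos ((p.1 - p.2) * ξ) =
      (Ifun t θ p.1 * cos (p.1 * ξ)) * (Ifun t w p.2 * cos (p.2 * ξ)) +
      (Ifun t θ p.1 * sin (p.1 * ξ)) * (Ifun t w p.2 * sin (p.2 * ξ)) := by
    intro p; rw [sub_mul, cos_sub]; ring
  have ic : ∀ a > 0, Integrable fun y => Ifun t a y * cos (y * ξ) := fun a ha =>
    (aux_Ifun_int t a ha).mul_bdd (c := 1) (by fun_prop)
      (Filter.Eventually.of_forall fun y => abs_cos_le_one _)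
  have is : ∀ a > 0, Integrable fun y => Ifun t a y * sin (y * ξ) := fun a ha =>
    (aux_Ifun_int t a ha).mul_bdd (c := 1) (by fun_prop)
      (Filter.Eventually.of_forall fun y => abs_sin_le_one _)
  simp_rw [e]
  rw [integral_add ((ic θ hθ).mul_prod (ic w hw)) ((is θ hθ).mul_prod (is w hw)),
    integral_prod_mul (fun y => Ifun t θ y * cos (y * ξ)) (fun y => Ifun t w y * cos (y * ξ)),
    integral_prod_mul (fun y => Ifun t θ y * sin (y * ξ)) (fun y => Ifun t w y * sin (y * ξ)),
    aux_Ifun_cos t θ ξ ht hθ hξ, aux_Ifun_cos t w ξ ht hw hξ, aux_Ifun_sin t θ ξ ht hθ hξ]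
  field_simp
  ring

lemma aux_Peq (H ξ A : ℝ) (hξ : ξ ≠ 0) :
    4 * A / ξ ^ 4 * |ξ| ^ (1 - 2 * H) = 4 * (A * |ξ| ^ (-3 - 2 * H)) := by
  have h : 0 < |ξ| := abs_pos.2 hξ
  rw [show -3 - 2 * H = (1 - 2 * H) - (4 : ℕ) by push_cast; ring, rpow_sub h (1 - 2 * H), rpow_natCast,
    show |ξ| ^ 4 = ξ ^ 4 from (even_two_mul 2).pow_abs ξ]
  ring

lemma aux_int_s9 (t H θ w : ℝ) (h1 : 1 / 2 < H) (h2 : H < 1) (ht : 0 < t) (hθ : 0 < θ) (hw : 0 < w) :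
    Integrable fun ξ : ℝ => 4 * (sin (t * ξ) ^ 2 * sin (θ * ξ) * sin (w * ξ)) / ξ ^ 4 *
      |ξ| ^ (1 - 2 * H) := by
  have hm : IntegrableOn (fun r : ℝ => if r ≤ 1 then 4 * (t ^ 2 * θ * w) * r ^ (1 - 2 * H)
      else 4 * r ^ (-3 - 2 * H)) (Set.Ioi 0) := by
    rw [← Set.Ioc_union_Ioi_eq_Ioi (zero_le_one (α := ℝ))]
    apply IntegrableOn.union
    · have := intervalIntegral.intervalIntegrable_rpow' (a := 0) (b := 1) (r := 1 - 2 * H)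
        (by linarith)
      rw [intervalIntegrable_iff_integrableOn_Ioc_of_le zero_le_one] at this
      refine IntegrableOn.congr_fun (this.const_mul (4 * (t ^ 2 * θ * w))) (fun r hr => ?_)
        measurableSet_Ioc
      rw [if_pos hr.2]
    · have := integrableOn_Ioi_rpow_of_lt (a := -3 - 2 * H) (c := 1) (by linarith) one_pos
      refine IntegrableOn.congr_fun (this.const_mul 4) (fun r hr => ?_) measurableSet_Ioi
      rw [if_neg (not_le.2 hr)]
  refine (aux_integrable_abs hm).mono' (Measurable.aestronglyMeasurable (by fun_prop)) ?_
  filter_upwards [Measure.ae_ne volume (0:ℝ)] with ξ hξ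
  have hp : 0 < |ξ| := abs_pos.2 hξ
  have sb : ∀ a > 0, |sin (a * ξ)| ≤ a * |ξ| := fun a ha => by
    have := abs_sin_le_abs (x := a * ξ)
    rwa [abs_mul, abs_of_pos ha] at this
  have s1 : ∀ a, |sin (a * ξ)| ≤ 1 := fun a => abs_sin_le_one _
  split_ifs with h
  · rw [norm_mul, norm_of_nonneg (r := |ξ| ^ (1 - 2 * H)) (by positivity)]
    gcongr
    rw [norm_div, div_le_iff₀ (norm_pos_iff.2 (pow_ne_zero 4 hξ))]
    simp only [norm_mul, norm_pow, norm_eq_abs]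
    calc |(4:ℝ)| * (|sin (t * ξ)| ^ 2 * |sin (θ * ξ)| * |sin (w * ξ)|)
        ≤ |(4:ℝ)| * ((t * |ξ|) ^ 2 * (θ * |ξ|) * (w * |ξ|)) := by
          gcongr
          exacts [sb t ht, sb θ hθ, sb w hw]
      _ = _ := by rw [abs_of_pos (by norm_num : (0:ℝ) < 4)]; ring
  · rw [aux_Peq H ξ _ hξ]
    simp only [norm_mul, norm_pow, norm_eq_abs]
    rw [abs_of_pos (by norm_num : (0:ℝ) < 4),
      abs_of_nonneg (by positivity : 0 ≤ |ξ| ^ (-3 - 2 * H))]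
    have : |sin (t * ξ)| ^ 2 * |sin (θ * ξ)| * |sin (w * ξ)| ≤ 1 ^ 2 * 1 * 1 := by
      gcongr
      exacts [s1 t, s1 θ, s1 w]
    have h0 : 0 ≤ |ξ| ^ (-3 - 2 * H) := by positivity
    nlinarith

/-- Plancherel-type computation: for `t > 0`, `H ∈ (1/2,1)` and `θ, w > 0`,
`α_H ∫∫ I_θ(y) I_w(z) |y-z|^{2H-2} dy dz
  = 4 c_H ∫ sin²(tξ) sin(θξ) sin(wξ) |ξ|^{-3-2H} dξ`,
with `α_H = H(2H-1)` and `c_H = Γ(2H+1) sin(πH)/(2π)`. -/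
theorem stmt_9 (t H : ℝ) (ht : 0 < t) (h1 : 1 / 2 < H) (h2 : H < 1)
    (θ w : ℝ) (hθ : 0 < θ) (hw : 0 < w) :
    H * (2 * H - 1) * ∫ y : ℝ, ∫ z : ℝ, Ifun t θ y * Ifun t w z * |y - z| ^ (2 * H - 2)
      = 4 * (Gamma (2 * H + 1) * Real.sin (π * H) / (2 * π)) *
        ∫ ξ : ℝ, Real.sin (t * ξ) ^ 2 * Real.sin (θ * ξ) * Real.sin (w * ξ)
          * |ξ| ^ (-3 - 2 * H) := by
  have hK := aux_kernel H (max (θ + t) (w + t)) _ h1 (Ifun t θ) (Ifun t w) (aux_Ifun_meas t θ hθ)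
    (aux_Ifun_int t w hw) (aux_Ifun_bound t θ)
    (fun y hy => aux_Ifun_supp t θ y hθ (lt_of_le_of_lt (le_max_left _ _) hy))
    (fun y hy => aux_Ifun_supp t w y hw (lt_of_le_of_lt (le_max_right _ _) hy))
  have M := aux_main H h1 h2 (Ifun t θ) (Ifun t w)
    (fun ξ => 4 * (sin (t * ξ) ^ 2 * sin (θ * ξ) * sin (w * ξ)) / ξ ^ 4)
    (aux_Ifun_int t θ hθ) (aux_Ifun_int t w hw) hK
    (fun ξ hξ => aux_P t θ w ξ ht hθ hw hξ) (by fun_prop) (aux_int_s9 t H θ w h1 h2 ht hθ hw)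
  rw [integral_prod _ hK] at M
  have e : ∫ ξ : ℝ, 4 * (sin (t * ξ) ^ 2 * sin (θ * ξ) * sin (w * ξ)) / ξ ^ 4 *
      |ξ| ^ (1 - 2 * H) = 4 * ∫ ξ : ℝ, Real.sin (t * ξ) ^ 2 * Real.sin (θ * ξ) * Real.sin (w * ξ)
          * |ξ| ^ (-3 - 2 * H) := by
    rw [← integral_const_mul]
    apply integral_congr_ae
    filter_upwards [Measure.ae_ne volume (0:ℝ)] with ξ hξ
    exact aux_Peq H ξ _ hξ
  rw [e] at M
  have c := aux_const H h1 h2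
  have hG1 : 0 < Gamma (1 - H) := Gamma_pos_of_pos (by linarith)
  apply mul_left_cancel₀ hG1.ne'
  rw [mul_left_comm, M, ← mul_assoc, c]
  ring
end
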